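/- Let Ω be a domain in ℝⁿ, let n < q ≤ p < ∞ and β = (q−n)/(q−1), and let F ∈ L¹_p(Ω) be a continuous function. There exist constants λ₁ = λ₁(n,q) ≥ 1 and C = C(n,q), depending only on n and q, such that for every x, y ∈ Ω and every R ≥ λ₁·d̃_{β,Ω}(x,y)^{1/β}, |F(x) − F(y)| ≤ C·R·(|Q(x,R)|^{−1} ∫_{Q(x,R) ∩ Ω} ‖∇F(z)‖^q dz)^{1/q}. -/

import Mathlib

open MeasureTheory Set Filter ENNReal NNReal

noncomputable section

/-- `ℝⁿ` equipped with the uniform norm `‖x‖ = max_i |x i|`. -/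
abbrev Eu (n : ℕ) : Type := Fin n → ℝ

variable {n : ℕ}

/-- The closed cube `Q(x,r)` with center `x` and `diam Q = 2r`
(the closed ball of radius `r` in the uniform norm). -/
def cube (x : Eu n) (r : ℝ) : Set (Eu n) := Metric.closedBall x r

/-- `dist(z, ∂Ω)`, the distance from `z` to the boundary of `Ω`. -/
def bdist (Ω : Set (Eu n)) (z : Eu n) : ℝ := Metric.infDist z (frontier Ω)

/-- The distance between two sets. -/
def setDistS (A B : Set (Eu n)) : ℝ := sInf {d : ℝ | ∃ a ∈ A, ∃ b ∈ B, d = dist a b}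

/-- The line integral `∫_{[x,y]} ρ(z) ds(z)` of `ρ` over the segment `[x,y]`
with respect to arc length. -/
def segInt (ρ : Eu n → ℝ) (x y : Eu n) : ℝ :=
  ∫ t in (0:ℝ)..1, ρ (x + t • (y - x)) * ‖y - x‖

/-- The set of subhyperbolic lengths `∫_γ dist(z,∂Ω)^{α-1} ds(z)` of rectifiable curves in `Ω`
joining `x` to `y`; rectifiable curves are encoded by their arc-length parametrizations,
i.e. `1`-Lipschitz maps `γ : [0,L] → Ω`. -/
def subLenSet (Ω : Set (Eu n)) (α : ℝ) (x y : Eu n) : Set ℝ :=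
  {d : ℝ | ∃ (L : ℝ) (γ : ℝ → Eu n), 0 ≤ L ∧
    LipschitzOnWith 1 γ (Icc 0 L) ∧ γ 0 = x ∧ γ L = y ∧
    (∀ s ∈ Icc (0:ℝ) L, γ s ∈ Ω) ∧
    IntervalIntegrable (fun s => bdist Ω (γ s) ^ (α - 1)) volume 0 L ∧
    d = ∫ s in (0:ℝ)..L, bdist Ω (γ s) ^ (α - 1)}

/-- The subhyperbolic metric `d_{α,Ω}(x,y)`. -/
def dSub (Ω : Set (Eu n)) (α : ℝ) (x y : Eu n) : ℝ := sInf (subLenSet Ω α x y)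

/-- The metric `d̃_{α,Ω}(x,y) = d_{α,Ω}(x,y) + ‖x-y‖^α`. -/
def dTil (Ω : Set (Eu n)) (α : ℝ) (x y : Eu n) : ℝ := dSub Ω α x y + ‖x - y‖ ^ α

/-- The half-open segment `(x,a]`. -/
def segOC (x a : Eu n) : Set (Eu n) := {z | ∃ t ∈ Set.Ioc (0:ℝ) 1, z = x + t • (a - x)}

/-- `x` is `Q`-visible in `Ω`: for each `y ∈ Q` the half-open segment `(x,y]` lies in `Ω`. -/
def QVisible (Ω Q : Set (Eu n)) (x : Eu n) : Prop :=
  ∀ y ∈ Q, ∀ t ∈ Set.Ioc (0:ℝ) 1, x + t • (y - x) ∈ Ω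

/-- `O_ε(∂Ω)`, the ε-neighborhood of `∂Ω` in `Ω`. -/
def Oeps (Ω : Set (Eu n)) (ε : ℝ) : Set (Eu n) := {x ∈ Ω | bdist Ω x < ε}

/-- `g` is the (first-order distributional) weak gradient of `F` on the open set `Ω`. -/
def HasWeakGradOn (F : Eu n → ℝ) (g : Eu n → Eu n) (Ω : Set (Eu n)) : Prop :=
  LocallyIntegrableOn F Ω volume ∧ LocallyIntegrableOn g Ω volume ∧
  ∀ φ : Eu n → ℝ, ContDiff ℝ (⊤ : ℕ∞) φ → HasCompactSupport φ → tsupport φ ⊆ Ω →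
    ∀ i : Fin n, ∫ x in Ω, F x * fderiv ℝ φ x (Pi.single i 1) =
      - ∫ x in Ω, g x i * φ x

/-- `F` is the continuous representative of an element of the homogeneous Sobolev space
`L¹_p(Ω)`, with weak gradient `g` and `‖∇F‖ ∈ L_p(Ω)`. -/
def ContL1pRep (Ω : Set (Eu n)) (p : ℝ) (F : Eu n → ℝ) (g : Eu n → Eu n) : Prop :=
  ContinuousOn F Ω ∧ HasWeakGradOn F g Ω ∧ IntegrableOn (fun z => ‖g z‖ ^ p) Ω volume

/-- `F` is the continuous representative of an element of `W¹_p(Ω) = L_p(Ω) ∩ L¹_p(Ω)`. -/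
def ContW1pRep (Ω : Set (Eu n)) (p : ℝ) (F : Eu n → ℝ) (g : Eu n → Eu n) : Prop :=
  ContL1pRep Ω p F g ∧ IntegrableOn (fun z => |F z| ^ p) Ω volume

/-- The norm `‖F‖_{W¹_p(Ω)} = ‖F‖_{L_p(Ω)} + ‖∇F‖_{L_p(Ω)}`. -/
def W1pNorm (Ω : Set (Eu n)) (p : ℝ) (F : Eu n → ℝ) (g : Eu n → Eu n) : ℝ :=
  (∫ z in Ω, |F z| ^ p) ^ (1/p) + (∫ z in Ω, ‖g z‖ ^ p) ^ (1/p)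

/-!
The estimate follows by summing the local Morrey inequality along a chain of Whitney-type cubes that
follows a curve of nearly minimal subhyperbolic length.

*Local estimate.* For a mollifier `ζ`, the kernel `K_s(z) = s⁻ⁿ ζ((z - b)/s)` satisfies
`∂ₛ K_s = -div V_s` with `V_s(z) = s⁻ⁿ ((z - b)/s) ζ((z - b)/s)`. Hence the weak gradient `g` of `F`
gives `d/ds ∫ F K_s = ∫ g · V_s` (`mol_hasDerivAt`), which Hölder bounds by a multiple of
`s^(-n/q) ‖g‖_q`. Integrating over `0 < s ≤ r`, where continuity of `F` identifies the limit at `0`,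
yields `|F a - F b| ≤ C r^(1 - n/q) ‖g‖_{L_q(Q(a, r))}` for `b ∈ Q(a, r)` (`morrey`).

*Chain.* Given a curve from `x` to `y` of subhyperbolic length `D`, start at `z₀ = x` and let `zᵢ₊₁` be
the point where the curve leaves `Q(zᵢ, rᵢ)`, `rᵢ = dist(zᵢ, ∂Ω)/10`, for the last time. Except in
the last cube, whose radius is comparable to the one before, the curve runs for a length at least `rᵢ`
between `zᵢ` and `zᵢ₊₁`, and the first piece of length `rᵢ` is at distance at most `11 rᵢ` from the
boundary, whence `∑ rᵢ^β ≤ 33 D` (`exists_chain`). The choice of last exits makes the centres separated, so the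
cubes overlap at most `5ⁿ` times (`overlap`).

*Summation.* With `λ₁ = 33^(1/β)` the condition on `R` gives `∑ rᵢ^β ≤ R^β`. As `β ≤ 1`, then also
`∑ rᵢ ≤ R`, so all cubes lie in `Q(x, R) ∩ Ω`. Since `(1 - n/q) · q/(q - 1) = β`, the discrete Hölder
inequality turns `∑ rᵢ^(1 - n/q) ‖g‖_{L_q(Qᵢ)}` into at most
`R^(1 - n/q) (5ⁿ ∫_{Q(x, R) ∩ Ω} ‖g‖^q)^(1/q)` (`chain_estimate`). When `y` is close to `x`, or
`Ω = ℝⁿ`, the local estimate on one cube suffices.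
-/

/-! ### Derivative of a mollification with respect to the scale -/

/-- The rescaled kernel `z ↦ s⁻ⁿ ζ((z - b) / s)` centred at `b`; the scale `s` is meant to be
positive. -/
def molK (ζ : Eu n → ℝ) (b : Eu n) (s : ℝ) (z : Eu n) : ℝ :=
  (s ^ n)⁻¹ * ζ (s⁻¹ • (z - b))

/-- The derivative of `molK ζ b s z` with respect to the scale `s`. -/
def molD (ζ : Eu n → ℝ) (b : Eu n) (s : ℝ) (z : Eu n) : ℝ :=
  -(s ^ (n + 1))⁻¹ * (n * ζ (s⁻¹ • (z - b)) + fderiv ℝ ζ (s⁻¹ • (z - b)) (s⁻¹ • (z - b)))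

/-- The `i`-th component of the vector field `V` with `div V = -∂ₛ (molK ζ b s)`. -/
def molV (ζ : Eu n → ℝ) (b : Eu n) (s : ℝ) (i : Fin n) (z : Eu n) : ℝ :=
  (s ^ n)⁻¹ * ((s⁻¹ • (z - b)) i * ζ (s⁻¹ • (z - b)))

lemma molK_hasDerivAt {ζ : Eu n → ℝ} (hζ : ContDiff ℝ (⊤ : ℕ∞) ζ) (b z : Eu n) {s : ℝ}
    (hs : 0 < s) : HasDerivAt (fun s => molK ζ b s z) (molD ζ b s z) s := by
  have h1 : HasDerivAt (fun s : ℝ => s⁻¹ • (z - b)) ((-(s ^ 2)⁻¹) • (z - b)) s :=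
    (hasDerivAt_inv hs.ne').smul_const _
  have h2 : HasFDerivAt ζ (fderiv ℝ ζ (s⁻¹ • (z - b))) (s⁻¹ • (z - b)) :=
    (hζ.differentiable (by simp)).differentiableAt.hasFDerivAt
  have h3 := h2.comp_hasDerivAt s h1
  have h4 : HasDerivAt (fun s : ℝ => (s ^ n)⁻¹) (-(n * s ^ (n - 1)) / (s ^ n) ^ 2) s :=
    (hasDerivAt_pow n s).inv (by positivity)
  refine (h4.mul h3).congr_deriv ?_
  unfold molD
  simp only [map_smul, smul_eq_mul, Function.comp]
  have h5 : (n : ℝ) * s ^ (n - 1) = n * s ^ n / s := by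
    rcases n with _ | m
    · simp
    · simp; field_simp; ring
  rw [h5]
  field_simp
  ring

lemma molV_contDiff {ζ : Eu n → ℝ} (hζ : ContDiff ℝ (⊤ : ℕ∞) ζ) (b : Eu n) (s : ℝ) (i : Fin n) :
    ContDiff ℝ (⊤ : ℕ∞) (molV ζ b s i) := by
  unfold molV
  have h1 : ContDiff ℝ (⊤ : ℕ∞) (fun z : Eu n => s⁻¹ • (z - b)) := by fun_prop
  exact contDiff_const.mul ((contDiff_pi.1 h1 i).mul (hζ.comp h1))

/-- The vector field `V` transports the kernel as the scale changes: `div V = -∂ₛ (molK ζ b s)`. -/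
lemma molV_div {ζ : Eu n → ℝ} (hζ : ContDiff ℝ (⊤ : ℕ∞) ζ) (b z : Eu n) {s : ℝ}
    (hs : 0 < s) :
    ∑ i, fderiv ℝ (molV ζ b s i) z (Pi.single i 1) = - molD ζ b s z := by
  have h1 : HasFDerivAt (fun z : Eu n => s⁻¹ • (z - b)) (s⁻¹ • ContinuousLinearMap.id ℝ (Eu n)) z :=
    ((hasFDerivAt_id z).sub_const b).fun_const_smul _
  have h2 : HasFDerivAt ζ (fderiv ℝ ζ (s⁻¹ • (z - b))) (s⁻¹ • (z - b)) :=
    (hζ.differentiable (by simp)).differentiableAt.hasFDerivAt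
  have h3 := h2.comp z h1
  have h4 : ∀ i, fderiv ℝ (molV ζ b s i) z (Pi.single i 1) = (s ^ (n+1))⁻¹ *
      (ζ (s⁻¹ • (z - b)) + fderiv ℝ ζ (s⁻¹ • (z - b)) (Pi.single i ((s⁻¹ • (z - b)) i))) := by
    intro i
    have h5 := ((hasFDerivAt_pi'.1 h1 i).mul h3).const_mul ((s ^ n)⁻¹)
    have h6 : fderiv ℝ (molV ζ b s i) z = _ := h5.fderiv
    rw [h6]
    have h7 : (Pi.single i ((s⁻¹ • (z - b)) i) : Eu n) = ((s⁻¹ • (z - b)) i) • Pi.single i (1:ℝ) := by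
      rw [← Pi.single_smul]; simp
    rw [h7]
    simp [Function.comp]
    field_simp
    ring
  rw [Finset.sum_congr rfl (fun i _ => h4 i), ← Finset.mul_sum, Finset.sum_add_distrib,
    ← map_sum, Finset.univ_sum_single]
  simp [molD]

lemma norm_scale_le {s : ℝ} (hs : 0 < s) {z b : Eu n} {c : ℝ} :
    ‖s⁻¹ • (z - b)‖ ≤ c ↔ z ∈ Metric.closedBall b (c * s) := by
  rw [mem_closedBall_iff_norm, norm_smul, norm_inv, Real.norm_of_nonneg hs.le,
    inv_mul_le_iff₀ hs, mul_comm]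

lemma molK_eq_zero {ζ : Eu n → ℝ} (h0 : ∀ u, 2 < ‖u‖ → ζ u = 0) {b z : Eu n} {s : ℝ}
    (hs : 0 < s) (hz : z ∉ Metric.closedBall b (2 * s)) : molK ζ b s z = 0 := by
  rw [← norm_scale_le hs, not_le] at hz
  simp [molK, h0 _ hz]

lemma molV_eq_zero {ζ : Eu n → ℝ} (h0 : ∀ u, 2 < ‖u‖ → ζ u = 0) {b z : Eu n} {s : ℝ}
    (hs : 0 < s) (i : Fin n) (hz : z ∉ Metric.closedBall b (2 * s)) : molV ζ b s i z = 0 := by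
  rw [← norm_scale_le hs, not_le] at hz
  simp [molV, h0 _ hz]

lemma molK_continuous {ζ : Eu n → ℝ} (hζ : ContDiff ℝ (⊤ : ℕ∞) ζ) (b : Eu n) (s : ℝ) :
    Continuous (molK ζ b s) := by
  unfold molK
  have := hζ.continuous
  fun_prop

lemma molD_continuousOn {ζ : Eu n → ℝ} (hζ : ContDiff ℝ (⊤ : ℕ∞) ζ) (b : Eu n) :
    ContinuousOn (fun x : ℝ × Eu n => molD ζ b x.1 x.2) {x | x.1 ≠ 0} := by
  unfold molD
  have h1 : ContinuousOn (fun x : ℝ × Eu n => x.1⁻¹ • (x.2 - b)) {x | x.1 ≠ 0} :=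
    (continuousOn_fst.inv₀ (fun x hx => hx)).smul (by fun_prop)
  have h2 : ContinuousOn (fun x : ℝ × Eu n => (x.1 ^ (n + 1))⁻¹) {x | x.1 ≠ 0} :=
    (continuousOn_fst.pow _).inv₀ (fun x hx => pow_ne_zero _ hx)
  have h3 : Continuous (fderiv ℝ ζ) := hζ.continuous_fderiv (by simp)
  exact h2.neg.mul ((continuousOn_const.mul (hζ.continuous.comp_continuousOn h1)).add
    ((h3.comp_continuousOn h1).clm_apply h1))

/-- A function continuous on `Ω`, multiplied by a continuous function that vanishes off a compact
subset of `Ω`, is integrable on `Ω`. -/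
lemma integrableOn_mul_of_support {Ω K : Set (Eu n)} (hΩ : IsOpen Ω) (hK : IsCompact K)
    (hKΩ : K ⊆ Ω) {F h : Eu n → ℝ} (hF : ContinuousOn F Ω) (hh : Continuous h)
    (h0 : ∀ z ∉ K, h z = 0) : IntegrableOn (fun z => F z * h z) Ω := by
  refine IntegrableOn.of_forall_sdiff_eq_zero
    (((hF.mono hKΩ).mul hh.continuousOn).integrableOn_compact hK) hΩ.measurableSet ?_
  intro z hz
  simp [h0 z hz.2]

lemma fderiv_eq_zero_off {K : Set (Eu n)} (hK : IsClosed K) {h : Eu n → ℝ}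
    (h0 : ∀ z ∉ K, h z = 0) {z : Eu n} (hz : z ∉ K) : fderiv ℝ h z = 0 := by
  have : h =ᶠ[nhds z] fun _ => 0 := by
    filter_upwards [hK.isOpen_compl.mem_nhds hz] with w hw using h0 w hw
  rw [this.fderiv_eq]; simp

/-- The identity `div V = -∂ₛ (molK ζ b s)`, integrated against `F` with the definition of the weak
gradient. -/
lemma integral_molD {Ω : Set (Eu n)} (hΩ : IsOpen Ω) {F : Eu n → ℝ} {g : Eu n → Eu n}
    (hF : ContinuousOn F Ω) (hg : HasWeakGradOn F g Ω) {ζ : Eu n → ℝ}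
    (hζ : ContDiff ℝ (⊤ : ℕ∞) ζ) (h0 : ∀ u, 2 < ‖u‖ → ζ u = 0) {b : Eu n} {s : ℝ} (hs : 0 < s)
    (hb : Metric.closedBall b (2 * s) ⊆ Ω) :
    ∫ z in Ω, F z * molD ζ b s z = ∑ i, ∫ z in Ω, g z i * molV ζ b s i z := by
  have hc : IsCompact (Metric.closedBall b (2 * s)) := isCompact_closedBall _ _
  have e1 : ∀ z, F z * molD ζ b s z =
      - ∑ i, F z * fderiv ℝ (molV ζ b s i) z (Pi.single i 1) := by
    intro z
    rw [← Finset.mul_sum, molV_div hζ b z hs]; ring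
  have hts : ∀ i, tsupport (molV ζ b s i) ⊆ Metric.closedBall b (2 * s) := by
    intro i
    refine closure_minimal ?_ Metric.isClosed_closedBall
    intro z hz
    by_contra h
    exact hz (molV_eq_zero h0 hs i h)
  simp_rw [e1]
  rw [integral_neg, integral_finsetSum, ← Finset.sum_neg_distrib]
  · refine Finset.sum_congr rfl fun i _ => ?_
    rw [hg.2.2 (molV ζ b s i) (molV_contDiff hζ b s i) (hc.of_isClosed_subset
      (isClosed_tsupport _) (hts i)) ((hts i).trans hb) i, neg_neg]
  · intro i _
    refine integrableOn_mul_of_support hΩ hc hb hF ?_ ?_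
    · exact ((molV_contDiff hζ b s i).continuous_fderiv (by simp)).clm_apply continuous_const
    · intro z hz
      rw [fderiv_eq_zero_off Metric.isClosed_closedBall (fun w hw => molV_eq_zero h0 hs i hw) hz]
      simp

/-- The derivative in `s` of the mollification `∫ F · molK ζ b s` is `∫ g · V`, where `g` is the weak
gradient of `F`. -/
lemma mol_hasDerivAt {Ω : Set (Eu n)} (hΩ : IsOpen Ω) {F : Eu n → ℝ} {g : Eu n → Eu n}
    (hF : ContinuousOn F Ω) (hg : HasWeakGradOn F g Ω) {ζ : Eu n → ℝ}
    (hζ : ContDiff ℝ (⊤ : ℕ∞) ζ) (h0 : ∀ u, 2 < ‖u‖ → ζ u = 0) {b : Eu n} {s r : ℝ} (hs : 0 < s)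
    (hsr : s < r) (hb : Metric.closedBall b (2 * r) ⊆ Ω) :
    HasDerivAt (fun s => ∫ z in Ω, F z * molK ζ b s z)
      (∑ i, ∫ z in Ω, g z i * molV ζ b s i z) s := by
  have hc : IsCompact (Metric.closedBall b (2 * r)) := isCompact_closedBall _ _
  have hsub : ∀ t, t ≤ r → Metric.closedBall b (2 * t) ⊆ Metric.closedBall b (2 * r) :=
    fun t ht => Metric.closedBall_subset_closedBall (by linarith)
  rw [← integral_molD hΩ hF hg hζ h0 hs ((hsub s hsr.le).trans hb)]
  have hDcont : ∀ t, 0 < t → Continuous (molD ζ b t) := by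
    intro t ht
    have := (molD_continuousOn hζ b).comp_continuous (f := fun z : Eu n => (t, z)) (by fun_prop)
      (fun z => ht.ne')
    exact this
  have hDzero : ∀ t, 0 < t → t ≤ r → ∀ z ∉ Metric.closedBall b (2 * r), molD ζ b t z = 0 := by
    intro t ht htr z hz
    rw [← neg_neg (molD ζ b t z), ← molV_div hζ b z ht, neg_eq_zero]
    refine Finset.sum_eq_zero fun i _ => ?_
    rw [fderiv_eq_zero_off Metric.isClosed_closedBall (fun w hw => molV_eq_zero h0 ht i hw)
      (fun h => hz (hsub t htr h))]
    simp
  have hcp : IsCompact (Icc (s/2) r ×ˢ Metric.closedBall b (2 * r)) := isCompact_Icc.prod hc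
  obtain ⟨B, hB⟩ := hcp.exists_bound_of_continuousOn
    (f := fun x : ℝ × Eu n => F x.2 * molD ζ b x.1 x.2) (by
      refine ContinuousOn.mul ?_ ?_
      · exact hF.comp continuousOn_snd fun x hx => hb hx.2
      · refine (molD_continuousOn hζ b).mono fun x hx => ?_
        have := hx.1.1
        simp only [mem_ofPred_eq]
        intro h
        linarith)
  have hKint : ∀ t, 0 < t → t ≤ r → IntegrableOn (fun z => F z * molK ζ b t z) Ω := by
    intro t ht htr
    exact integrableOn_mul_of_support hΩ hc hb hF (molK_continuous hζ b t)
      (fun z hz => molK_eq_zero h0 ht (fun h => hz (hsub t htr h)))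
  refine (hasDerivAt_integral_of_dominated_loc_of_deriv_le (μ := volume.restrict Ω)
    (s := Ioo (s/2) r) (F := fun t z => F z * molK ζ b t z) (F' := fun t z => F z * molD ζ b t z)
    (bound := (Metric.closedBall b (2 * r)).indicator fun _ => B)
    (Ioo_mem_nhds (by linarith) hsr) ?_ (hKint s hs hsr.le) ?_ ?_ ?_ ?_).2
  · filter_upwards [Ioo_mem_nhds (show s/2 < s by linarith) hsr] with t ht
    exact (hKint t (by linarith [ht.1]) ht.2.le).aestronglyMeasurable
  · exact (integrableOn_mul_of_support hΩ hc hb hF (hDcont s hs)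
      (hDzero s hs hsr.le)).aestronglyMeasurable
  · refine Eventually.of_forall fun z t ht => ?_
    by_cases hz : z ∈ Metric.closedBall b (2 * r)
    · rw [indicator_of_mem hz]
      exact hB (t, z) ⟨⟨ht.1.le, ht.2.le⟩, hz⟩
    · rw [indicator_of_notMem hz, hDzero t (by linarith [ht.1]) ht.2.le z hz]
      simp
  · refine Integrable.integrableOn ?_
    rw [integrable_indicator_iff Metric.isClosed_closedBall.measurableSet]
    exact continuousOn_const.integrableOn_compact hc
  · refine Eventually.of_forall fun z t ht => ?_
    exact (molK_hasDerivAt hζ b z (by linarith [ht.1])).const_mul _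

/-! ### The Morrey inequality -/

lemma volume_real_closedBall (b : Eu n) {s : ℝ} (hs : 0 ≤ s) :
    volume.real (Metric.closedBall b s) = (2 * s) ^ n := by
  rw [Measure.real, Real.volume_pi_closedBall b hs, ENNReal.toReal_ofReal (by positivity)]
  simp

/-- The Hölder inequality on a set `T` of finite measure, with the `L_q` mean taken over a larger `S`. -/
lemma holder_set {T S : Set (Eu n)} (hTS : T ⊆ S) (hT : volume T ≠ ⊤)
    {g : Eu n → Eu n} {q : ℝ} (hq : 1 < q)
    (hgm : AEStronglyMeasurable g (volume.restrict S))
    (hgq : IntegrableOn (fun z => ‖g z‖ ^ q) S) :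
    ∫ z in T, ‖g z‖ ≤ (volume.real T) ^ (1 - 1/q) * (∫ z in S, ‖g z‖ ^ q) ^ (1/q) := by
  have hpq : q.HolderConjugate (q.conjExponent) := Real.HolderConjugate.conjExponent hq
  have : IsFiniteMeasure (volume.restrict T) := ⟨by simpa using hT.lt_top⟩
  have hmT : AEStronglyMeasurable g (volume.restrict T) := hgm.mono_set hTS
  have hLp : MemLp (fun z => ‖g z‖) (ENNReal.ofReal q) (volume.restrict T) := by
    refine (integrable_norm_rpow_iff hmT.norm (by simp; linarith) (by simp)).1 ?_
    rw [ENNReal.toReal_ofReal (by linarith)]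
    simp only [norm_norm]
    exact hgq.mono_set hTS
  have h := integral_mul_le_Lp_mul_Lq_of_nonneg (μ := volume.restrict T) hpq
    (f := fun z => ‖g z‖) (g := fun _ => 1)
    (Eventually.of_forall fun z => norm_nonneg _) (Eventually.of_forall fun z => zero_le_one) hLp
    (memLp_const _)
  simp only [mul_one, Real.one_rpow, integral_const, smul_eq_mul] at h
  rw [measureReal_restrict_apply_univ] at h
  have e : 1 / q.conjExponent = 1 - 1 / q := by
    rw [one_div, one_div, hpq.one_sub_inv]
  rw [e, mul_comm] at h
  refine h.trans ?_
  gcongr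
  exact Eventually.of_forall fun z => by positivity

/-- Differential form of the Morrey estimate: the mollification of `F` changes with the scale `s` at a
rate `O(s^(-n/q))`, which is integrable at `0` when `q > n`. The hypothesis `hS` lets the gradient be
integrated over a set `S` smaller than the support cube. -/
lemma mol_deriv_bound {Ω S : Set (Eu n)} (hΩ : IsOpen Ω) {F : Eu n → ℝ} {g : Eu n → Eu n}
    (hg : HasWeakGradOn F g Ω) {ζ : Eu n → ℝ}
    (h0 : ∀ u, 2 < ‖u‖ → ζ u = 0) {M : ℝ} (hM : ∀ u, |ζ u| ≤ M) {b : Eu n} {s : ℝ} (hs : 0 < s)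
    (hb : Metric.closedBall b (2 * s) ⊆ Ω) (hSm : MeasurableSet S) (hSΩ : S ⊆ Ω)
    (hS : ∀ z, ζ (s⁻¹ • (z - b)) ≠ 0 → z ∈ S)
    {q : ℝ} (hq : 1 < q) (hgq : IntegrableOn (fun z => ‖g z‖ ^ q) S) :
    |∑ i, ∫ z in Ω, g z i * molV ζ b s i z| ≤
      (n * (2 * M) * (4 ^ n : ℝ) ^ (1 - 1/q) * (∫ z in S, ‖g z‖ ^ q) ^ (1/q)) *
        s ^ (-(n / q : ℝ)) := by
  have hM0 : 0 ≤ M := (abs_nonneg _).trans (hM 0)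
  set T := Metric.closedBall b (2 * s) ∩ S with hTdef
  have hc : IsCompact (Metric.closedBall b (2 * s)) := isCompact_closedBall _ _
  have hTm : MeasurableSet T := Metric.isClosed_closedBall.measurableSet.inter hSm
  have hTv : volume (Metric.closedBall b (2 * s)) ≠ ⊤ := hc.measure_lt_top.ne
  have hTv' : volume T ≠ ⊤ := measure_ne_top_of_subset inter_subset_left hTv
  have hgT : IntegrableOn g T :=
    (hg.2.1.integrableOn_compact_subset hb hc).mono_set inter_subset_left
  have hV0 : ∀ i, ∀ z ∉ T, molV ζ b s i z = 0 := by
    intro i z hz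
    by_cases h1 : z ∈ Metric.closedBall b (2 * s)
    · have h2 : ζ (s⁻¹ • (z - b)) = 0 := by
        by_contra h
        exact hz ⟨h1, hS z h⟩
      simp [molV, h2]
    · exact molV_eq_zero h0 hs i h1
  have hVb : ∀ i z, z ∈ T → |molV ζ b s i z| ≤ (s ^ n)⁻¹ * (2 * M) := by
    intro i z hz
    have h1 := (norm_scale_le hs).2 hz.1
    have h2 : |(s⁻¹ • (z - b)) i| ≤ 2 := (norm_le_pi_norm _ i).trans h1
    unfold molV
    rw [abs_mul, abs_mul, abs_of_pos (by positivity : 0 < (s ^ n)⁻¹)]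
    gcongr
    exact hM _
  have hi : ∀ i, |∫ z in Ω, g z i * molV ζ b s i z| ≤
      (s ^ n)⁻¹ * (2 * M) * ∫ z in T, ‖g z‖ := by
    intro i
    have e : ∫ z in Ω, g z i * molV ζ b s i z = ∫ z in T, g z i * molV ζ b s i z := by
      refine setIntegral_eq_of_subset_of_forall_sdiff_eq_zero hΩ.measurableSet
        (inter_subset_right.trans hSΩ) ?_
      intro z hz
      rw [hV0 i z hz.2, mul_zero]
    rw [e, ← integral_const_mul, ← Real.norm_eq_abs]
    refine norm_integral_le_of_norm_le (hgT.norm.const_mul _) ?_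
    refine (ae_restrict_iff' hTm).2 (Eventually.of_forall fun z hz => ?_)
    rw [norm_mul, mul_comm]
    gcongr
    · exact hVb i z hz
    · exact norm_le_pi_norm _ i
  have hH := holder_set (inter_subset_right : T ⊆ S) hTv' hq
    (hg.2.1.aestronglyMeasurable.mono_set hSΩ) hgq
  have hG : 0 ≤ (∫ z in S, ‖g z‖ ^ q) ^ (1/q) := by
    have : 0 ≤ ∫ z in S, ‖g z‖ ^ q := integral_nonneg fun z => by positivity
    positivity
  have hq1 : 0 ≤ 1 - 1/q := by
    rw [sub_nonneg, div_le_one (by linarith)]; exact hq.le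
  have hvol : volume.real T ≤ (4 * s) ^ n := by
    calc volume.real T ≤ volume.real (Metric.closedBall b (2 * s)) :=
          measureReal_mono inter_subset_left hTv
      _ = (4 * s) ^ n := by rw [volume_real_closedBall b (by positivity)]; ring
  have hs' : (s ^ n)⁻¹ * ((4 * s) ^ n : ℝ) ^ (1 - 1/q) =
      (4 ^ n : ℝ) ^ (1 - 1/q) * s ^ (-(n / q : ℝ)) := by
    rw [mul_pow, Real.mul_rpow (by positivity) (by positivity), mul_left_comm]
    congr 1
    rw [← Real.rpow_natCast s n, ← Real.rpow_neg hs.le, ← Real.rpow_mul hs.le,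
      ← Real.rpow_add hs]
    congr 1; ring
  calc |∑ i, ∫ z in Ω, g z i * molV ζ b s i z|
      ≤ ∑ i, |∫ z in Ω, g z i * molV ζ b s i z| := Finset.abs_sum_le_sum_abs _ _
    _ ≤ ∑ i : Fin n, (s ^ n)⁻¹ * (2 * M) * ∫ z in T, ‖g z‖ :=
        Finset.sum_le_sum fun i _ => hi i
    _ = n * ((s ^ n)⁻¹ * (2 * M) * ∫ z in T, ‖g z‖) := by simp
    _ ≤ n * ((s ^ n)⁻¹ * (2 * M) *
        (((4 * s) ^ n : ℝ) ^ (1 - 1/q) * (∫ z in S, ‖g z‖ ^ q) ^ (1/q))) := by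
        gcongr
        exact hH.trans (by gcongr)
    _ = n * (2 * M) * ((s ^ n)⁻¹ * ((4 * s) ^ n : ℝ) ^ (1 - 1/q)) *
          (∫ z in S, ‖g z‖ ^ q) ^ (1/q) := by ring
    _ = _ := by rw [hs']; ring

/-- As the scale tends to `0`, the mollifications at `b` converge to `F b`. -/
lemma mol_tendsto {Ω : Set (Eu n)} (hΩ : IsOpen Ω) {F : Eu n → ℝ}
    (hF : ContinuousOn F Ω) {ζ : Eu n → ℝ}
    (hζ : ContDiff ℝ (⊤ : ℕ∞) ζ) (h0 : ∀ u, 2 < ‖u‖ → ζ u = 0) {M : ℝ} (hM : ∀ u, |ζ u| ≤ M)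
    (h1 : ∫ u, ζ u = 1) {b : Eu n} (hb : b ∈ Ω) :
    Tendsto (fun s => ∫ z in Ω, F z * molK ζ b s z) (nhdsWithin 0 (Ioi 0)) (nhds (F b)) := by
  have hM0 : 0 ≤ M := (abs_nonneg _).trans (hM 0)
  rw [Metric.tendsto_nhds]
  intro ε hε
  obtain ⟨ρ, hρ, hρΩ⟩ := Metric.isOpen_iff.1 hΩ b hb
  set η := ε / (2 * (M * 4 ^ n + 1)) with hη
  have hηpos : 0 < η := by positivity
  obtain ⟨δ, hδ, hδF⟩ := Metric.continuousOn_iff.1 hF b hb η hηpos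
  have hev : ∀ᶠ s in nhdsWithin (0:ℝ) (Ioi 0), s ∈ Ioo 0 (min ρ δ / 4) :=
    Ioo_mem_nhdsGT (by positivity)
  filter_upwards [hev] with s hs
  have hs0 := hs.1
  have hc : IsCompact (Metric.closedBall b (2 * s)) := isCompact_closedBall _ _
  have hm1 : min ρ δ ≤ ρ := min_le_left _ _
  have hm2 : min ρ δ ≤ δ := min_le_right _ _
  have hsub : Metric.closedBall b (2 * s) ⊆ Ω :=
    (Metric.closedBall_subset_ball (by linarith [hs.2])).trans hρΩ
  have hK1 : ∫ z in Ω, molK ζ b s z = 1 := by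
    rw [setIntegral_eq_integral_of_forall_compl_eq_zero
      (fun z hz => molK_eq_zero h0 hs0 (fun h => hz (hsub h)))]
    unfold molK
    rw [integral_const_mul, integral_sub_right_eq_self (fun z => ζ (s⁻¹ • z)),
      Measure.integral_comp_inv_smul_of_nonneg _ _ hs0.le, h1]
    simp [hs0.ne']
  have hKi : IntegrableOn (molK ζ b s) Ω := by
    simpa using integrableOn_mul_of_support hΩ hc hsub (F := fun _ => 1) continuousOn_const
      (molK_continuous hζ b s) (fun z hz => molK_eq_zero h0 hs0 hz)
  have hFKi : IntegrableOn (fun z => F z * molK ζ b s z) Ω :=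
    integrableOn_mul_of_support hΩ hc hsub hF
      (molK_continuous hζ b s) (fun z hz => molK_eq_zero h0 hs0 hz)
  have e1 : (∫ z in Ω, F z * molK ζ b s z) - F b = ∫ z in Ω, (F z - F b) * molK ζ b s z := by
    simp_rw [sub_mul]
    rw [integral_sub hFKi (hKi.const_mul _), integral_const_mul, hK1, mul_one]
  have e2 : ∫ z in Ω, (F z - F b) * molK ζ b s z =
      ∫ z in Metric.closedBall b (2 * s), (F z - F b) * molK ζ b s z := by
    refine setIntegral_eq_of_subset_of_forall_sdiff_eq_zero hΩ.measurableSet hsub ?_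
    intro z hz
    rw [molK_eq_zero h0 hs0 hz.2, mul_zero]
  rw [Real.dist_eq, e1, e2, ← Real.norm_eq_abs]
  have hbd : ‖∫ z in Metric.closedBall b (2 * s), (F z - F b) * molK ζ b s z‖ ≤
      (η * ((s ^ n)⁻¹ * M)) * volume.real (Metric.closedBall b (2 * s)) := by
    refine norm_setIntegral_le_of_norm_le_const hc.measure_lt_top ?_
    intro z hz
    have hz' : dist z b < δ := lt_of_le_of_lt hz (by linarith [hs.2])
    have h3 := (hδF z (hsub hz) hz').le
    rw [Real.dist_eq] at h3
    rw [norm_mul]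
    refine mul_le_mul h3 ?_ (norm_nonneg _) hηpos.le
    rw [molK, norm_mul, Real.norm_of_nonneg (by positivity)]
    gcongr
    exact hM _
  refine lt_of_le_of_lt hbd ?_
  rw [volume_real_closedBall b (by positivity)]
  have e3 : η * ((s ^ n)⁻¹ * M) * (2 * (2 * s)) ^ n = η * (M * 4 ^ n) := by
    rw [show 2 * (2 * s) = 4 * s by ring, mul_pow]
    field_simp
  rw [e3]
  calc η * (M * 4 ^ n) ≤ η * (M * 4 ^ n + 1) := by gcongr; linarith
    _ = ε / 2 := by rw [hη]; field_simp
    _ < ε := by linarith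

/-- The Morrey estimate between the value of `F` at `b` and its mollification at scale `r`, obtained by
integrating `mol_deriv_bound` over the scales in `(0, r]`. -/
lemma morrey_mol {Ω S : Set (Eu n)} (hΩ : IsOpen Ω) {F : Eu n → ℝ} {g : Eu n → Eu n}
    (hF : ContinuousOn F Ω) (hg : HasWeakGradOn F g Ω) {ζ : Eu n → ℝ}
    (hζ : ContDiff ℝ (⊤ : ℕ∞) ζ) (h0 : ∀ u, 2 < ‖u‖ → ζ u = 0) {M : ℝ} (hM : ∀ u, |ζ u| ≤ M)
    (h1 : ∫ u, ζ u = 1) {b : Eu n} {r : ℝ} (hr : 0 < r)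
    (hb : Metric.closedBall b (4 * r) ⊆ Ω) (hSm : MeasurableSet S) (hSΩ : S ⊆ Ω)
    (hS : ∀ s, 0 < s → s ≤ r → ∀ z, ζ (s⁻¹ • (z - b)) ≠ 0 → z ∈ S)
    {q : ℝ} (hq : 1 < q) (hnq : n < q) (hgq : IntegrableOn (fun z => ‖g z‖ ^ q) S) :
    |(∫ z in Ω, F z * molK ζ b r z) - F b| ≤
      n * (2 * M) * (4 ^ n : ℝ) ^ (1 - 1/q) / (1 - n / q) * r ^ (1 - n / q : ℝ) *
        (∫ z in S, ‖g z‖ ^ q) ^ (1/q) := by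
  have hM0 : 0 ≤ M := (abs_nonneg _).trans (hM 0)
  have hα : 0 < 1 - n / q := by
    rw [sub_pos, div_lt_one (by linarith)]; exact hnq
  set α : ℝ := 1 - n / q with hαdef
  set G := (∫ z in S, ‖g z‖ ^ q) ^ (1/q) with hGdef
  have hG : 0 ≤ G := by
    have : 0 ≤ ∫ z in S, ‖g z‖ ^ q := integral_nonneg fun z => by positivity
    positivity
  set A := n * (2 * M) * (4 ^ n : ℝ) ^ (1 - 1/q) * G with hA
  have hA0 : 0 ≤ A := by positivity
  have hsub : ∀ t, t ≤ 2 * r → Metric.closedBall b (2 * t) ⊆ Ω :=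
    fun t ht => (Metric.closedBall_subset_closedBall (by linarith)).trans hb
  set Φ := fun s => ∫ z in Ω, F z * molK ζ b s z with hΦ
  have hd : ∀ s, 0 < s → s < 2 * r →
      HasDerivAt Φ (∑ i, ∫ z in Ω, g z i * molV ζ b s i z) s := fun s hs hsr =>
    mol_hasDerivAt hΩ hF hg hζ h0 hs hsr (hsub _ le_rfl)
  have hB : ∀ s : ℝ, 0 < s → HasDerivAt (fun s : ℝ => A / α * s ^ α) (A * s ^ (-(n / q : ℝ))) s := by
    intro s hs
    refine ((Real.hasDerivAt_rpow_const (p := α) (Or.inl hs.ne')).const_mul (A / α)).congr_deriv ?_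
    have e : α - 1 = -(n / q : ℝ) := by rw [hαdef]; ring
    rw [e]
    field_simp
  -- `A / α * s ^ α` dominates because its derivative is the bound of `mol_deriv_bound`.
  have key : ∀ ε, 0 < ε → ε < r → |Φ r - Φ ε| ≤ A / α * r ^ α := by
    intro ε hε hεr
    have := image_norm_le_of_norm_deriv_right_le_deriv_boundary' (a := ε) (b := r)
      (f := fun s => Φ s - Φ ε) (f' := fun s => ∑ i, ∫ z in Ω, g z i * molV ζ b s i z)
      (B := fun s => A / α * s ^ α) (B' := fun s => A * s ^ (-(n / q : ℝ)))
      (fun s hs => ((hd s (by linarith [hs.1]) (by linarith [hs.2])).continuousAt.sub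
        continuousAt_const).continuousWithinAt)
      (fun s hs => ((hd s (by linarith [hs.1]) (by linarith [hs.2])).sub_const _).hasDerivWithinAt)
      (by simp; positivity)
      (fun s hs => (hB s (by linarith [hs.1])).continuousAt.continuousWithinAt)
      (fun s hs => (hB s (by linarith [hs.1])).hasDerivWithinAt)
      (fun s hs => by
        have hs0 : 0 < s := by linarith [hs.1]
        exact mol_deriv_bound hΩ hg h0 hM hs0 (hsub s (by linarith [hs.2])) hSm hSΩ
          (hS s hs0 hs.2.le) hq hgq)
      (right_mem_Icc.2 hεr.le)
    exact this
  have hlim : Tendsto (fun ε => |Φ r - Φ ε|) (nhdsWithin 0 (Ioi 0)) (nhds |Φ r - F b|) :=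
    ((tendsto_const_nhds).sub (mol_tendsto hΩ hF hζ h0 hM h1
      (hb (Metric.mem_closedBall_self (by positivity))))).abs
  have hfin : |Φ r - F b| ≤ A / α * r ^ α := by
    refine le_of_tendsto hlim ?_
    filter_upwards [Ioo_mem_nhdsGT hr] with ε hε using key ε hε.1 hε.2
  refine hfin.trans (le_of_eq ?_)
  rw [hA]; ring

/-- The Morrey inequality between the centre and a point of a cube whose fivefold dilation lies in `Ω`.
Both values are compared with one mollification at scale `r`. Only the gradient on the cube itself
enters. -/
lemma morrey (n : ℕ) {q : ℝ} (hq : 1 < q) (hnq : n < q) : ∃ C : ℝ, 0 ≤ C ∧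
    ∀ (Ω : Set (Eu n)), IsOpen Ω → ∀ (F : Eu n → ℝ) (g : Eu n → Eu n),
      ContinuousOn F Ω → HasWeakGradOn F g Ω → ∀ (a b : Eu n) (r : ℝ), 0 < r →
      dist b a ≤ r → Metric.closedBall a (5 * r) ⊆ Ω →
      IntegrableOn (fun z => ‖g z‖ ^ q) (Metric.closedBall a r) →
      |F a - F b| ≤ C * (r ^ (1 - n / q : ℝ) *
        (∫ z in Metric.closedBall a r, ‖g z‖ ^ q) ^ (1/q)) := by
  let f : ContDiffBump (0 : Eu n) := ⟨1/2, 1, by norm_num, by norm_num⟩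
  set η : Eu n → ℝ := f.normed volume with hη
  have hηs : ContDiff ℝ (⊤ : ℕ∞) η := f.contDiff_normed
  have hη1 : ∫ u, η u = 1 := f.integral_normed
  have hη0 : ∀ u, 1 ≤ ‖u‖ → η u = 0 := by
    intro u hu
    by_contra h
    have : u ∈ Function.support η := h
    rw [hη, f.support_normed_eq, mem_ball_zero_iff] at this
    exact absurd this (not_lt.2 hu)
  obtain ⟨M, hM⟩ : ∃ M, ∀ u, ‖η u‖ ≤ M :=
    f.hasCompactSupport_normed.exists_bound_of_continuous f.continuous_normed
  have hM0 : 0 ≤ M := (norm_nonneg _).trans (hM 0)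
  have hα : 0 < 1 - n / q := by
    rw [sub_pos, div_lt_one (by linarith)]; exact hnq
  set C₀ : ℝ := n * (2 * M) * (4 ^ n : ℝ) ^ (1 - 1/q) / (1 - n / q) with hC₀
  refine ⟨2 * C₀, by positivity, ?_⟩
  intro Ω hΩ F g hF hg a b r hr hba hball hgq
  have main : ∀ c : Eu n, dist c a ≤ r →
      |(∫ z in Ω, F z * molK η a r z) - F c| ≤
        C₀ * r ^ (1 - n / q : ℝ) * (∫ z in Metric.closedBall a r, ‖g z‖ ^ q) ^ (1/q) := by
    intro c hc
    -- The shift `e` makes the mollifier centred at `c`, at scale `r`, coincide with the one at `a`.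
    -- At a scale `s < r` its support is the cube of radius `s` about `c + s • e`, inside `Q(a, r)`.
    set e : Eu n := r⁻¹ • (a - c) with he
    have hre : r • e = a - c := by rw [he, smul_inv_smul₀ hr.ne']
    have hen : ‖e‖ ≤ 1 := by
      rw [he, norm_smul, norm_inv, Real.norm_of_nonneg hr.le, inv_mul_le_iff₀ hr, mul_one,
        ← dist_eq_norm, dist_comm]
      exact hc
    have heq : molK η a r = molK (fun u => η (u - e)) c r := by
      funext z
      simp only [molK]
      congr 2
      rw [he, ← smul_sub]; congr 1; abel
    rw [heq]
    refine morrey_mol (ζ := fun u => η (u - e)) (b := c) hΩ hF hg (hηs.comp (contDiff_id.sub contDiff_const)) ?_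
      (fun u => hM _) ?_ hr ?_ Metric.isClosed_closedBall.measurableSet ?_ ?_ hq hnq hgq
    · intro u hu
      refine hη0 _ ?_
      have := norm_sub_norm_le u e
      linarith
    · rw [integral_sub_right_eq_self (fun u => η u)]; exact hη1
    · refine Subset.trans (Metric.closedBall_subset_closedBall' ?_) hball
      linarith
    · exact (Metric.closedBall_subset_closedBall (by linarith)).trans hball
    · intro s hs hsr z hz
      have h1 : ‖s⁻¹ • (z - c) - e‖ < 1 := by
        by_contra h
        exact hz (hη0 _ (not_lt.1 h))
      have h2 : ‖z - c - s • e‖ ≤ s := by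
        have : z - c - s • e = s • (s⁻¹ • (z - c) - e) := by
          rw [smul_sub, smul_inv_smul₀ hs.ne']
        rw [this, norm_smul, Real.norm_of_nonneg hs.le]
        nlinarith
      have h3 : z - a = (z - c - s • e) - (r - s) • e := by
        rw [sub_smul, hre]; abel
      rw [mem_closedBall_iff_norm, h3]
      refine (norm_sub_le _ _).trans ?_
      rw [norm_smul, Real.norm_of_nonneg (by linarith)]
      nlinarith [norm_nonneg e]
  have ha := main a (by simpa using hr.le)
  have hb := main b hba
  rw [abs_sub_comm] at ha
  calc |F a - F b| ≤ _ + _ := abs_sub_le _ (∫ z in Ω, F z * molK η a r z) _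
    _ ≤ _ := add_le_add ha hb
    _ = _ := by ring

/-! ### Boundary distance and curves -/

/-- A cube around `x ∈ Ω` of radius less than `dist(x, ∂Ω)` stays in `Ω`: being connected, it would
otherwise meet `∂Ω`. -/
lemma closedBall_subset_of_lt_bdist {Ω : Set (Eu n)} (hΩ : IsOpen Ω) {x : Eu n} (hx : x ∈ Ω)
    {r : ℝ} (hr : r < bdist Ω x) : Metric.closedBall x r ⊆ Ω := by
  rcases lt_or_ge r 0 with h | h
  · rw [Metric.closedBall_eq_empty.2 h]; exact empty_subset _
  refine IsPreconnected.subset_left_of_subset_union hΩ (v := (closure Ω)ᶜ)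
    isClosed_closure.isOpen_compl ?_ ?_ ⟨x, Metric.mem_closedBall_self h, hx⟩
    (convex_closedBall x r).isPreconnected
  · exact disjoint_compl_right.mono_left subset_closure
  · intro z hz
    by_contra hcon
    simp only [mem_union, mem_compl_iff, not_or, not_not] at hcon
    have hzf : z ∈ frontier Ω := by
      rw [hΩ.frontier_eq]; exact ⟨hcon.2, hcon.1⟩
    have h1 := Metric.infDist_le_dist_of_mem (x := x) hzf
    rw [dist_comm] at h1
    exact absurd (h1.trans hz) (not_le.2 hr)

lemma bdist_le (Ω : Set (Eu n)) (z w : Eu n) : bdist Ω z ≤ bdist Ω w + dist z w :=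
  Metric.infDist_le_infDist_add_dist

lemma bdist_pos {Ω : Set (Eu n)} (hΩ : IsOpen Ω) (hfr : (frontier Ω).Nonempty) {z : Eu n}
    (hz : z ∈ Ω) : 0 < bdist Ω z := by
  refine (isClosed_frontier.notMem_iff_infDist_pos hfr).1 fun h => ?_
  rw [hΩ.frontier_eq] at h
  exact h.2 hz

/-- Some `1`-Lipschitz curve in `Ω` joins `x` to `y`. -/
def LipJoined (Ω : Set (Eu n)) (x y : Eu n) : Prop :=
  ∃ (L : ℝ) (γ : ℝ → Eu n), 0 ≤ L ∧ LipschitzOnWith 1 γ (Icc 0 L) ∧ γ 0 = x ∧ γ L = y ∧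
    ∀ s ∈ Icc (0:ℝ) L, γ s ∈ Ω

lemma LipJoined.trans {Ω : Set (Eu n)} {x y z : Eu n} (h1 : LipJoined Ω x y)
    (h2 : LipJoined Ω y z) : LipJoined Ω x z := by
  obtain ⟨L, γ, hL, hγ, h0, h1, hΩ⟩ := h1
  obtain ⟨L', γ', hL', hγ', h0', h1', hΩ'⟩ := h2
  have key : ∀ s t, s ∈ Icc 0 (L + L') → t ∈ Icc 0 (L + L') → s ≤ t →
      dist (if s ≤ L then γ s else γ' (s - L)) (if t ≤ L then γ t else γ' (t - L)) ≤ t - s := by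
    intro s t hs ht hst
    by_cases hsL : s ≤ L
    · by_cases htL : t ≤ L
      · rw [if_pos hsL, if_pos htL]
        have := hγ.dist_le_mul s ⟨hs.1, hsL⟩ t ⟨ht.1, htL⟩
        rw [NNReal.coe_one, one_mul, dist_comm s, Real.dist_eq, abs_of_nonneg (by linarith)] at this
        exact this
      · rw [if_pos hsL, if_neg htL]
        have a1 := hγ.dist_le_mul s ⟨hs.1, hsL⟩ L ⟨hL, le_rfl⟩
        have a2 := hγ'.dist_le_mul 0 ⟨le_rfl, hL'⟩ (t - L) ⟨by linarith, by linarith [ht.2]⟩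
        rw [NNReal.coe_one, one_mul, dist_comm s, Real.dist_eq, abs_of_nonneg (by linarith)] at a1
        rw [NNReal.coe_one, one_mul, dist_comm 0, Real.dist_eq, abs_of_nonneg (by linarith)] at a2
        rw [h0', ← h1] at a2
        have := dist_triangle (γ s) (γ L) (γ' (t - L))
        linarith
    · have htL : ¬ t ≤ L := fun h => hsL (hst.trans h)
      rw [if_neg hsL, if_neg htL]
      have := hγ'.dist_le_mul (s - L) ⟨by linarith, by linarith [hs.2]⟩
        (t - L) ⟨by linarith, by linarith [ht.2]⟩
      rw [NNReal.coe_one, one_mul, dist_comm (s - L), Real.dist_eq,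
        abs_of_nonneg (by linarith)] at this
      linarith
  refine ⟨L + L', fun s => if s ≤ L then γ s else γ' (s - L), by positivity, ?_, ?_, ?_, ?_⟩
  · refine LipschitzOnWith.of_dist_le_mul fun s hs t ht => ?_
    rw [NNReal.coe_one, one_mul]
    rcases le_total s t with h | h
    · refine (key s t hs ht h).trans ?_
      rw [dist_comm, Real.dist_eq]; exact le_abs_self _
    · rw [dist_comm]
      refine (key t s ht hs h).trans ?_
      rw [Real.dist_eq]; exact le_abs_self _
  · simp [hL, h0]
  · by_cases h : L' = 0
    · subst h
      simp [h1, ← h1', h0']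
    · have : 0 < L' := lt_of_le_of_ne hL' (Ne.symm h)
      simp [this, h1']
  · intro s hs
    dsimp only
    split_ifs with h
    · exact hΩ s ⟨hs.1, h⟩
    · exact hΩ' _ ⟨by linarith, by linarith [hs.2]⟩

lemma lipJoined_of_ball {Ω : Set (Eu n)} {c x y : Eu n} {r : ℝ} (h : Metric.ball c r ⊆ Ω)
    (hx : x ∈ Metric.ball c r) (hy : y ∈ Metric.ball c r) : LipJoined Ω x y := by
  by_cases hxy : x = y
  · subst hxy
    exact ⟨0, fun _ => x, le_rfl, LipschitzOnWith.of_dist_le_mul (by simp), rfl, rfl,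
      fun s _ => h hx⟩
  have hd : 0 < ‖y - x‖ := norm_pos_iff.2 (sub_ne_zero.2 (Ne.symm hxy))
  refine ⟨‖y - x‖, fun s => x + (s / ‖y - x‖) • (y - x), hd.le, ?_, by simp, ?_, ?_⟩
  · refine LipschitzOnWith.of_dist_le_mul fun s _ t _ => ?_
    have e : x + (s / ‖y - x‖) • (y - x) - (x + (t / ‖y - x‖) • (y - x)) =
        ((s - t) / ‖y - x‖) • (y - x) := by
      rw [_root_.sub_div, sub_smul]; abel
    rw [NNReal.coe_one, one_mul, dist_eq_norm, e, norm_smul, norm_div, norm_norm,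
      div_mul_cancel₀ _ hd.ne', dist_eq_norm]
  · simp [div_self hd.ne']
  · intro s hs
    exact h ((convex_ball c r).add_smul_sub_mem hx hy
      ⟨div_nonneg hs.1 hd.le, (div_le_one hd).2 hs.2⟩)

lemma lipJoined {Ω : Set (Eu n)} (hΩ : IsOpen Ω) (hc : IsConnected Ω) {x y : Eu n} (hx : x ∈ Ω)
    (hy : y ∈ Ω) : LipJoined Ω x y := by
  refine hc.isPreconnected.induction₂' (LipJoined Ω) ?_ ?_ hx hy
  · intro z hz
    obtain ⟨ρ, hρ, hρΩ⟩ := Metric.isOpen_iff.1 hΩ z hz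
    filter_upwards [mem_nhdsWithin_of_mem_nhds (Metric.ball_mem_nhds z hρ)] with w hw
    exact ⟨lipJoined_of_ball hρΩ (Metric.mem_ball_self hρ) hw,
      lipJoined_of_ball hρΩ hw (Metric.mem_ball_self hρ)⟩
  · intro a b c _ _ _ h1 h2
    exact h1.trans h2

lemma subLenSet_nonempty {Ω : Set (Eu n)} (hΩ : IsOpen Ω) (hc : IsConnected Ω)
    (hfr : (frontier Ω).Nonempty) (β : ℝ) {x y : Eu n} (hx : x ∈ Ω)
    (hy : y ∈ Ω) : (subLenSet Ω β x y).Nonempty := by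
  obtain ⟨L, γ, hL, hγ, h0, h1, hγΩ⟩ := lipJoined hΩ hc hx hy
  refine ⟨_, L, γ, hL, hγ, h0, h1, hγΩ, ?_, rfl⟩
  refine ContinuousOn.intervalIntegrable ?_
  rw [uIcc_of_le hL]
  refine ContinuousOn.rpow_const ?_ fun s hs => Or.inl (bdist_pos hΩ hfr (hγΩ s hs)).ne'
  exact (Metric.continuous_infDist_pt _).comp_continuousOn hγ.continuousOn

lemma dSub_nonneg (Ω : Set (Eu n)) (β : ℝ) (x y : Eu n) : 0 ≤ dSub Ω β x y := by
  refine Real.sInf_nonneg ?_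
  rintro d ⟨L, γ, hL, -, -, -, -, -, rfl⟩
  exact intervalIntegral.integral_nonneg hL fun s _ => Real.rpow_nonneg Metric.infDist_nonneg _

/-- The last time at which a curve is in the cube of radius `r` about its position at time `s`. -/
lemma last_exit {γ : ℝ → Eu n} {L : ℝ} (hγ : LipschitzOnWith 1 γ (Icc 0 L)) {s r : ℝ}
    (hs : s ∈ Icc 0 L) (hr : 0 < r) :
    ∃ s' ∈ Icc (0:ℝ) L, s ≤ s' ∧ dist (γ s') (γ s) ≤ r ∧ (s' < L → r ≤ s' - s) ∧
      (s' < L → ∀ t ∈ Icc (0:ℝ) L, s' ≤ t → r ≤ dist (γ t) (γ s)) := by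
  have hlip : ∀ a ∈ Icc 0 L, ∀ b ∈ Icc 0 L, a ≤ b → dist (γ b) (γ a) ≤ b - a := by
    intro a ha b hb hab
    have := hγ.dist_le_mul b hb a ha
    rw [NNReal.coe_one, one_mul, Real.dist_eq, abs_of_nonneg (by linarith)] at this
    exact this
  set A := Icc 0 L ∩ (fun t => dist (γ t) (γ s)) ⁻¹' Iic r with hA
  have hAc : IsClosed A := by
    refine ContinuousOn.preimage_isClosed_of_isClosed ?_ isClosed_Icc isClosed_Iic
    exact continuous_dist.comp_continuousOn (hγ.continuousOn.prodMk continuousOn_const)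
  have hsA : s ∈ A := ⟨hs, by simp [hr.le]⟩
  obtain ⟨s', hs'⟩ := (isCompact_Icc.of_isClosed_subset hAc inter_subset_left).exists_isGreatest
    ⟨s, hsA⟩
  have hs'A := hs'.1
  have hge : s' < L → r ≤ dist (γ s') (γ s) := by
    intro hlt
    by_contra hcon
    push Not at hcon
    set ε := min (r - dist (γ s') (γ s)) (L - s') with hε
    have hε0 : 0 < ε := lt_min (by linarith) (by linarith)
    have he1 : ε ≤ r - dist (γ s') (γ s) := min_le_left _ _
    have he2 : ε ≤ L - s' := min_le_right _ _
    have hmem : s' + ε ∈ Icc 0 L := ⟨by linarith [hs'A.1.1], by linarith⟩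
    have h1 := hlip s' hs'A.1 (s' + ε) hmem (by linarith)
    have h2 := dist_triangle (γ (s' + ε)) (γ s') (γ s)
    have : s' + ε ∈ A := ⟨hmem, by simp only [mem_preimage, mem_Iic]; linarith⟩
    linarith [hs'.2 this]
  refine ⟨s', hs'A.1, hs'.2 hsA, hs'A.2, fun h => ?_, fun h t ht hst => ?_⟩
  · exact (hge h).trans (hlip s hs s' hs'A.1 (hs'.2 hsA))
  · rcases eq_or_lt_of_le hst with rfl | hlt
    · exact hge h
    · by_contra hcon
      have : t ∈ A := ⟨ht, (not_le.1 hcon).le⟩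
      linarith [hs'.2 this]

/-! ### Chains of Whitney-type cubes -/

/-- A curve of subhyperbolic length `D` from `x` to a far point `y` carries a chain of Whitney-type
cubes `Q(z i, bdist Ω (z i) / 10)` from `x` to `y` whose centres are separated and whose radii
satisfy `∑ rᵢ ^ β ≤ 33 D`. -/
lemma exists_chain {Ω : Set (Eu n)} (hΩ : IsOpen Ω) (hfr : (frontier Ω).Nonempty) {β : ℝ}
    (hβ0 : 0 < β) (hβ1 : β ≤ 1) {x y : Eu n} {D : ℝ} (hD : D ∈ subLenSet Ω β x y)
    (hfar : bdist Ω x / 10 < dist y x) :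
    ∃ (m : ℕ) (z : ℕ → Eu n), z 0 = x ∧ z m = y ∧ (∀ i, z i ∈ Ω) ∧
      (∀ i, dist (z (i + 1)) (z i) ≤ bdist Ω (z i) / 10) ∧
      (∀ i j, i < j → j < m → bdist Ω (z i) / 10 ≤ dist (z j) (z i)) ∧
      ∑ i ∈ Finset.range m, (bdist Ω (z i) / 10) ^ β ≤ 33 * D := by
  obtain ⟨L, γ, hL, hγ, h0, h1, hγΩ, hint, hDeq⟩ := hD
  have hpos : ∀ s ∈ Icc 0 L, 0 < bdist Ω (γ s) := fun s hs => bdist_pos hΩ hfr (hγΩ s hs)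
  have hlip : ∀ a ∈ Icc 0 L, ∀ b ∈ Icc 0 L, a ≤ b → dist (γ b) (γ a) ≤ b - a := by
    intro a ha b hb hab
    have := hγ.dist_le_mul b hb a ha
    rw [NNReal.coe_one, one_mul, Real.dist_eq, abs_of_nonneg (by linarith)] at this
    exact this
  obtain ⟨s₀, hs₀, hmin⟩ := isCompact_Icc.exists_isMinOn (nonempty_Icc.2 hL)
    ((Metric.continuous_infDist_pt (frontier Ω)).comp_continuousOn hγ.continuousOn)
  set r₀ := bdist Ω (γ s₀) / 10 with hr₀
  have hr₀pos : 0 < r₀ := by have := hpos s₀ hs₀; positivity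
  have hr₀le : ∀ s ∈ Icc 0 L, r₀ ≤ bdist Ω (γ s) / 10 := by
    intro s hs
    have : bdist Ω (γ s₀) ≤ bdist Ω (γ s) := isMinOn_iff.1 hmin s hs
    rw [hr₀]; linarith
  have hex : ∀ s, ∃ s', s ∈ Icc (0:ℝ) L → (s' ∈ Icc (0:ℝ) L ∧ s ≤ s' ∧
      dist (γ s') (γ s) ≤ bdist Ω (γ s) / 10 ∧ (s' < L → bdist Ω (γ s) / 10 ≤ s' - s) ∧
      (s' < L → ∀ t ∈ Icc (0:ℝ) L, s' ≤ t → bdist Ω (γ s) / 10 ≤ dist (γ t) (γ s))) := by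
    intro s
    by_cases hs : s ∈ Icc (0:ℝ) L
    · obtain ⟨s', h⟩ := last_exit hγ hs (r := bdist Ω (γ s) / 10)
        (by have := hpos s hs; positivity)
      exact ⟨s', fun _ => h⟩
    · exact ⟨0, fun h => absurd h hs⟩
  choose N hN using hex
  -- Each time `σ (i + 1)` is the last one at which the curve is in the cube about `γ (σ i)`.
  set σ : ℕ → ℝ := fun i => N^[i] 0 with hσ
  have hσ0 : σ 0 = 0 := rfl
  have hσs : ∀ i, σ (i + 1) = N (σ i) := fun i => Function.iterate_succ_apply' N i 0
  have hmem : ∀ i, σ i ∈ Icc (0:ℝ) L := by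
    intro i
    induction i with
    | zero => exact ⟨le_rfl, hL⟩
    | succ k ih => rw [hσs]; exact (hN _ ih).1
  have hstep : ∀ i, σ i ≤ σ (i + 1) := fun i => by rw [hσs]; exact (hN _ (hmem i)).2.1
  have hmono : Monotone σ := monotone_nat_of_le_succ hstep
  -- Every radius is at least `r₀ > 0`, so each step before time `L` takes time at least `r₀`.
  have hterm : ∃ i, σ i = L := by
    by_contra hcon
    push Not at hcon
    have hlt : ∀ i, σ i < L := fun i => lt_of_le_of_ne (hmem i).2 (hcon i)
    have hgrow : ∀ i : ℕ, i * r₀ ≤ σ i := by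
      intro i
      induction i with
      | zero => simp [hσ0]
      | succ k ih =>
        have h2 := (hN _ (hmem k)).2.2.2.1
        rw [← hσs] at h2
        have h3 := h2 (hlt _)
        have h4 := hr₀le _ (hmem k)
        push_cast
        linarith
    obtain ⟨k, hk⟩ := exists_nat_gt (L / r₀)
    rw [div_lt_iff₀ hr₀pos] at hk
    linarith [hgrow k, hlt k]
  classical
  obtain ⟨m, hm, hmlt⟩ : ∃ m, σ m = L ∧ ∀ i < m, σ i < L := by
    refine ⟨Nat.find hterm, Nat.find_spec hterm, fun i hi => ?_⟩
    exact lt_of_le_of_ne (hmem i).2 (Nat.find_min hterm hi)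
  have hdist : ∀ i, dist (γ (σ (i + 1))) (γ (σ i)) ≤ bdist Ω (γ (σ i)) / 10 := by
    intro i; rw [hσs]; exact (hN _ (hmem i)).2.2.1
  have hx0 : 0 ≤ bdist Ω x := Metric.infDist_nonneg
  -- As `y` is far from `x`, the chain has at least two cubes.
  obtain ⟨k, rfl⟩ : ∃ k, m = k + 2 := by
    rcases m with _ | _ | k
    · exfalso
      rw [hσ0] at hm
      rw [← h0, ← h1, ← hm, dist_self, h0] at hfar
      linarith
    · exfalso
      have := hdist 0
      rw [zero_add] at hm
      rw [zero_add, hm, hσ0, h0, h1] at this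
      linarith
    · exact ⟨k, rfl⟩
  refine ⟨k + 2, fun i => γ (σ i), by simp [hσ0, h0], by simp only [hm, h1],
    fun i => hγΩ _ (hmem i), hdist, ?_, ?_⟩
  · intro i j hij hj
    have h2 := (hN _ (hmem i)).2.2.2.2
    rw [← hσs] at h2
    exact h2 (hmlt (i + 1) (by omega)) _ (hmem j) (hmono hij)
  · set ρ : ℕ → ℝ := fun i => bdist Ω (γ (σ i)) / 10 with hρ
    have hρpos : ∀ i, 0 < ρ i := fun i => by have := hpos _ (hmem i); simp only [hρ]; positivity
    have hpart : ∀ a b, a ∈ Icc 0 L → b ∈ Icc 0 L →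
        IntervalIntegrable (fun s => bdist Ω (γ s) ^ (β - 1)) volume a b := by
      intro a b ha hb
      refine hint.mono_set ?_
      rw [uIcc_of_le hL]
      exact uIcc_subset_Icc ha hb
    have hnn : ∀ s, 0 ≤ bdist Ω (γ s) ^ (β - 1) := fun s =>
      Real.rpow_nonneg Metric.infDist_nonneg _
    have hone : ∀ i ∈ Finset.range (k + 1),
        ρ i ^ β ≤ 11 * ∫ s in (σ i)..(σ (i + 1)), bdist Ω (γ s) ^ (β - 1) := by
      intro i hi
      rw [Finset.mem_range] at hi
      have h2 := (hN _ (hmem i)).2.2.2.1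
      rw [← hσs] at h2
      have h3 : ρ i ≤ σ (i + 1) - σ i := h2 (hmlt (i + 1) (by omega))
      have hmid : σ i + ρ i ∈ Icc 0 L :=
        ⟨by linarith [(hmem i).1, hρpos i], by linarith [(hmem (i + 1)).2]⟩
      have h4 : ∫ s in (σ i)..(σ i + ρ i), (11 * ρ i) ^ (β - 1) ≤
          ∫ s in (σ i)..(σ i + ρ i), bdist Ω (γ s) ^ (β - 1) := by
        refine intervalIntegral.integral_mono_on (by linarith [hρpos i])
          intervalIntegrable_const (hpart _ _ (hmem i) hmid) ?_
        intro s hs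
        have hs' : s ∈ Icc 0 L := ⟨(hmem i).1.trans hs.1, hs.2.trans hmid.2⟩
        -- The distance to the boundary is `1`-Lipschitz, hence at most `11 ρᵢ` near `γ (σ i)`.
        refine Real.rpow_le_rpow_of_nonpos (hpos s hs') ?_ (by linarith)
        have h5 := bdist_le Ω (γ s) (γ (σ i))
        have h6 := hlip _ (hmem i) s hs' hs.1
        have h7 : bdist Ω (γ (σ i)) = 10 * ρ i := by simp only [hρ]; ring
        linarith [hs.2]
      have h5 : ∫ s in (σ i)..(σ i + ρ i), bdist Ω (γ s) ^ (β - 1) ≤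
          ∫ s in (σ i)..(σ (i + 1)), bdist Ω (γ s) ^ (β - 1) := by
        rw [← intervalIntegral.integral_add_adjacent_intervals (hpart _ _ (hmem i) hmid)
          (hpart _ _ hmid (hmem (i + 1)))]
        have := intervalIntegral.integral_nonneg (μ := volume)
          (show σ i + ρ i ≤ σ (i + 1) by linarith) (fun s _ => hnn s)
        linarith
      rw [intervalIntegral.integral_const, smul_eq_mul, add_sub_cancel_left,
        Real.mul_rpow (by norm_num) (hρpos i).le] at h4
      have h6 : (11:ℝ)⁻¹ ≤ 11 ^ (β - 1) := by
        rw [← Real.rpow_neg_one]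
        exact Real.rpow_le_rpow_of_exponent_le (by norm_num) (by linarith)
      have h7 : ρ i * ρ i ^ (β - 1) = ρ i ^ β := by
        rw [Real.rpow_sub_one (hρpos i).ne']; field_simp [(hρpos i).ne']
      have h8 : 0 ≤ ρ i ^ β := Real.rpow_nonneg (hρpos i).le _
      have h9 : ρ i * (11 ^ (β - 1) * ρ i ^ (β - 1)) = 11 ^ (β - 1) * ρ i ^ β := by
        rw [← h7]; ring
      rw [h9] at h4
      nlinarith [mul_le_mul_of_nonneg_right h6 h8]
    have hsum : ∑ i ∈ Finset.range (k + 1), ρ i ^ β ≤ 11 * D := by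
      refine (Finset.sum_le_sum hone).trans ?_
      rw [← Finset.mul_sum, intervalIntegral.sum_integral_adjacent_intervals
        (fun i _ => hpart _ _ (hmem i) (hmem (i + 1))), hσ0, hDeq,
        ← intervalIntegral.integral_add_adjacent_intervals
          (hpart 0 _ ⟨le_rfl, hL⟩ (hmem (k + 1))) (hpart _ L (hmem (k + 1)) ⟨hL, le_rfl⟩)]
      have := intervalIntegral.integral_nonneg (μ := volume) (hmem (k + 1)).2 (fun s _ => hnn s)
      linarith
    -- The last cube may be left before the curve has run a length `ρ (k + 1)`; its radius is
    -- compared with the one before.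
    have hlast : ρ (k + 1) ^ β ≤ 2 * ρ k ^ β := by
      have h2 : ρ (k + 1) ≤ 2 * ρ k := by
        have h3 := bdist_le Ω (γ (σ (k + 1))) (γ (σ k))
        have h4 := hdist k
        have h5 := hpos _ (hmem k)
        simp only [hρ]; linarith
      calc ρ (k + 1) ^ β ≤ (2 * ρ k) ^ β := Real.rpow_le_rpow (hρpos _).le h2 hβ0.le
        _ = 2 ^ β * ρ k ^ β := Real.mul_rpow (by norm_num) (hρpos k).le
        _ ≤ 2 ^ (1:ℝ) * ρ k ^ β := by
          have := hρpos k
          gcongr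
          norm_num
        _ = 2 * ρ k ^ β := by rw [Real.rpow_one]
    have hk : ρ k ^ β ≤ ∑ i ∈ Finset.range (k + 1), ρ i ^ β :=
      Finset.single_le_sum (f := fun i => ρ i ^ β)
        (fun i _ => Real.rpow_nonneg (hρpos i).le _) (Finset.mem_range.2 (Nat.lt_succ_self k))
    rw [Finset.sum_range_succ]
    linarith

/-- Bounded overlap of a chain of separated Whitney-type cubes. The cubes through `w` have radii between
`ρ` and `2ρ` with `ρ = bdist Ω w / 11`, and their centres are `ρ`-separated, so the count is the
classical `5 ^ n` of the Besicovitch covering theorem. -/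
lemma overlap {Ω : Set (Eu n)} {z : ℕ → Eu n} {m : ℕ} (hpos : ∀ i, 0 < bdist Ω (z i))
    (hsep : ∀ i j, i < j → j < m → bdist Ω (z i) / 10 ≤ dist (z j) (z i)) (w : Eu n)
    (I : Finset ℕ) (hI : ∀ i ∈ I, i < m ∧ w ∈ Metric.closedBall (z i) (bdist Ω (z i) / 10)) :
    I.card ≤ 5 ^ n := by
  classical
  rcases I.eq_empty_or_nonempty with rfl | ⟨i₀, hi₀⟩
  · simp
  set ρ := bdist Ω w / 11 with hρ
  have hlow : ∀ i ∈ I, ρ ≤ bdist Ω (z i) / 10 := by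
    intro i hi
    have h1 : dist w (z i) ≤ _ := (hI i hi).2
    have h2 := bdist_le Ω w (z i)
    rw [hρ]; linarith
  have hup : ∀ i ∈ I, bdist Ω (z i) / 10 ≤ 2 * ρ := by
    intro i hi
    have h1 : dist w (z i) ≤ _ := (hI i hi).2
    have h2 := bdist_le Ω (z i) w
    rw [dist_comm] at h2
    have h3 := hpos i
    rw [hρ]; linarith
  have hρ0 : 0 < ρ := by linarith [hup i₀ hi₀, hpos i₀]
  have hsep' : ∀ i ∈ I, ∀ j ∈ I, i ≠ j → ρ ≤ dist (z i) (z j) := by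
    intro i hi j hj hij
    rcases lt_or_gt_of_ne hij with h | h
    · rw [dist_comm]; exact (hlow i hi).trans (hsep i j h (hI j hj).1)
    · exact (hlow j hj).trans (hsep j i h (hI i hi).1)
  set c : ℕ → Eu n := fun i => ρ⁻¹ • (z i - w) with hc
  have hcd : ∀ i j, ‖c i - c j‖ = ρ⁻¹ * dist (z i) (z j) := by
    intro i j
    simp only [hc]
    rw [← smul_sub, norm_smul, norm_inv, Real.norm_of_nonneg hρ0.le, sub_sub_sub_cancel_right,
      dist_eq_norm]
  have hcsep : ∀ i ∈ I, ∀ j ∈ I, i ≠ j → 1 ≤ ‖c i - c j‖ := by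
    intro i hi j hj hij
    rw [hcd, ← inv_mul_cancel₀ hρ0.ne']
    exact mul_le_mul_of_nonneg_left (hsep' i hi j hj hij) (by positivity)
  have hinj : Set.InjOn c I := by
    intro i hi j hj hij
    by_contra hne
    have := hcsep i hi j hj hne
    rw [hij, sub_self, norm_zero] at this
    linarith
  rw [← Finset.card_image_of_injOn hinj]
  have := Besicovitch.card_le_of_separated (I.image c) (by
    intro a ha
    obtain ⟨i, hi, rfl⟩ := Finset.mem_image.1 ha
    simp only [hc]
    rw [norm_smul, norm_inv, Real.norm_of_nonneg hρ0.le, inv_mul_le_iff₀ hρ0, ← dist_eq_norm,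
      dist_comm, mul_comm]
    exact (show dist w (z i) ≤ _ from (hI i hi).2).trans (hup i hi)) (by
    intro a ha b hb hab
    obtain ⟨i, hi, rfl⟩ := Finset.mem_image.1 ha
    obtain ⟨j, hj, rfl⟩ := Finset.mem_image.1 hb
    exact hcsep i hi j hj (fun h => hab (by rw [h])))
  simpa using this

/-- Sets inside `U` that cover each point at most `K` times have integrals summing to at most `K` times the
integral over `U`. -/
lemma sum_setIntegral_le {U : Set (Eu n)} {h : Eu n → ℝ} (hh : ∀ z, 0 ≤ h z)
    (hint : IntegrableOn h U) {m : ℕ} {Q : ℕ → Set (Eu n)} (hQm : ∀ i, MeasurableSet (Q i))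
    (hQU : ∀ i < m, Q i ⊆ U) {K : ℕ}
    (hK : ∀ w (I : Finset ℕ), (∀ i ∈ I, i < m ∧ w ∈ Q i) → I.card ≤ K) :
    ∑ i ∈ Finset.range m, ∫ z in Q i, h z ≤ K * ∫ z in U, h z := by
  classical
  have e : ∀ i ∈ Finset.range m, ∫ z in Q i, h z = ∫ z in U, (Q i).indicator h z := by
    intro i hi
    rw [setIntegral_indicator (hQm i), inter_eq_right.2 (hQU i (Finset.mem_range.1 hi))]
  rw [Finset.sum_congr rfl e, ← integral_finsetSum _ (fun i _ => hint.indicator (hQm i)),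
    ← integral_const_mul]
  refine integral_mono (integrable_finsetSum _ fun i _ => hint.indicator (hQm i))
    (hint.const_mul _) fun w => ?_
  have h2 : ∀ i ∈ Finset.range m, (Q i).indicator h w = if w ∈ Q i then h w else 0 :=
    fun i _ => by simp [indicator_apply]
  rw [Finset.sum_congr rfl h2, ← Finset.sum_filter, Finset.sum_const, nsmul_eq_mul]
  refine mul_le_mul_of_nonneg_right ?_ (hh w)
  have := hK w ((Finset.range m).filter fun i => w ∈ Q i) (by simp)
  exact_mod_cast this

/-! ### Summation along a chain -/

/-- A bound by `R^(1-n/q) I^(1/q)` is a bound by `R` times the `q`-mean over the cube. -/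
lemma scale_mean {q R I : ℝ} (hR : 0 < R) (hI : 0 ≤ I) (x : Eu n) :
    R ^ (1 - n/q : ℝ) * I ^ (1/q) =
      2 ^ ((n:ℝ)/q) * (R * (I / (volume (cube x R)).toReal) ^ (1/q)) := by
  have hv : (volume (cube x R)).toReal = (2 * R) ^ n := volume_real_closedBall x hR.le
  have e1 : ((2 * R) ^ n) ^ (1/q) = 2 ^ ((n:ℝ)/q) * R ^ ((n:ℝ)/q) := by
    rw [← Real.rpow_natCast, ← Real.rpow_mul (by positivity), mul_one_div,
      Real.mul_rpow (by norm_num) hR.le]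
  have h2 : (0:ℝ) < 2 ^ ((n:ℝ)/q) := Real.rpow_pos_of_pos (by norm_num) _
  have h3 : 0 < R ^ ((n:ℝ)/q) := Real.rpow_pos_of_pos hR _
  rw [hv, Real.div_rpow hI (by positivity), e1, Real.rpow_sub hR, Real.rpow_one]
  field_simp

/-- Summing the Morrey inequality (the hypothesis `hmor`) along a chain of separated Whitney-type cubes:
the discrete Hölder inequality separates the radii, controlled by `hsum`, from the integrals,
controlled by the bounded overlap. -/
lemma chain_estimate {q C₁ R : ℝ} (hq : 1 < q) (hnq : n < q) (hC₁ : 0 ≤ C₁)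
    (hmor : ∀ Ω : Set (Eu n), IsOpen Ω → ∀ F g, ContinuousOn F Ω → HasWeakGradOn F g Ω →
      ∀ a b r, 0 < r → dist b a ≤ r → Metric.closedBall a (5*r) ⊆ Ω →
      IntegrableOn (fun z => ‖g z‖^q) (Metric.closedBall a r) →
      |F a - F b| ≤ C₁ * (r^(1 - n/q : ℝ) * (∫ z in Metric.closedBall a r, ‖g z‖^q)^(1/q)))
    {Ω : Set (Eu n)} (hΩ : IsOpen Ω) (hfr : (frontier Ω).Nonempty) {F : Eu n → ℝ}
    {g : Eu n → Eu n} (hF : ContinuousOn F Ω)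
    (hg : HasWeakGradOn F g Ω) {x y : Eu n} (hR : 0 < R)
    (hint : IntegrableOn (fun z => ‖g z‖^q) (cube x R ∩ Ω)) {m : ℕ} {z : ℕ → Eu n}
    (hz0 : z 0 = x) (hzm : z m = y) (hzΩ : ∀ i, z i ∈ Ω)
    (hstep : ∀ i, dist (z (i+1)) (z i) ≤ bdist Ω (z i)/10)
    (hsep : ∀ i j, i < j → j < m → bdist Ω (z i)/10 ≤ dist (z j) (z i))
    (hsum : ∑ i ∈ Finset.range m, (bdist Ω (z i)/10) ^ ((q - n)/(q - 1)) ≤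
      R ^ ((q - n)/(q - 1))) :
    |F x - F y| ≤ C₁ * ((5:ℝ)^n) ^ (1/q) *
      (R ^ (1 - n/q : ℝ) * (∫ w in cube x R ∩ Ω, ‖g w‖^q) ^ (1/q)) := by
  set β : ℝ := (q - n)/(q - 1) with hβ
  have hq1 : 0 < q - 1 := by linarith
  have hq0 : 0 < q := by linarith
  have hβ0 : 0 < β := div_pos (by linarith) hq1
  set r : ℕ → ℝ := fun i => bdist Ω (z i)/10 with hr
  have hb : ∀ i, 0 < bdist Ω (z i) := fun i => bdist_pos hΩ hfr (hzΩ i)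
  have hr0 : ∀ i, 0 < r i := fun i => by have := hb i; simp only [hr]; linarith
  have hr0' : ∀ i, 0 ≤ r i := fun i => (hr0 i).le
  -- Since `β ≤ 1` and each radius is at most `R`, the radii themselves sum to at most `R`.
  have hβ1 : β ≤ 1 := by
    rw [hβ, div_le_one hq1]
    -- For `n = 0` the space is a point, which cannot be both in the open `Ω` and in its frontier.
    rcases Nat.eq_zero_or_pos n with h0 | h0
    · subst h0
      exfalso
      obtain ⟨w, hw⟩ := hfr
      have h2 := hb 0
      rw [bdist, Subsingleton.elim (z 0) w, Metric.infDist_zero_of_mem hw] at h2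
      exact lt_irrefl _ h2
    · have : (1:ℝ) ≤ n := by exact_mod_cast h0
      linarith
  have hrR : ∀ i < m, r i ≤ R := by
    intro i hi
    have h1 := (Finset.single_le_sum (f := fun i => r i ^ β)
      (fun j _ => Real.rpow_nonneg (hr0' j) β) (Finset.mem_range.2 hi)).trans hsum
    exact (Real.rpow_le_rpow_iff (hr0' i) hR.le hβ0).1 h1
  have hsumR : ∑ i ∈ Finset.range m, r i ≤ R := by
    calc ∑ i ∈ Finset.range m, r i ≤ ∑ i ∈ Finset.range m, r i ^ β * R ^ (1 - β) := by
          refine Finset.sum_le_sum fun i hi => ?_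
          calc r i = r i ^ β * r i ^ (1 - β) := by
                rw [← Real.rpow_add (hr0 i)]; simp
            _ ≤ _ := by
                have := hrR i (Finset.mem_range.1 hi)
                have h1 : 0 ≤ 1 - β := by linarith
                have := Real.rpow_le_rpow (hr0' i) this h1
                exact mul_le_mul_of_nonneg_left this (Real.rpow_nonneg (hr0' i) β)
      _ = (∑ i ∈ Finset.range m, r i ^ β) * R ^ (1 - β) := (Finset.sum_mul _ _ _).symm
      _ ≤ R ^ β * R ^ (1 - β) :=
          mul_le_mul_of_nonneg_right hsum (Real.rpow_nonneg hR.le _)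
      _ = R := by rw [← Real.rpow_add hR]; simp
  have hdist : ∀ i, dist (z i) x ≤ ∑ j ∈ Finset.range i, r j := by
    intro i
    rw [← hz0, dist_comm]
    refine (dist_le_range_sum_dist z i).trans (Finset.sum_le_sum fun j _ => ?_)
    rw [dist_comm]; exact hstep j
  have hQ : ∀ i < m, Metric.closedBall (z i) (r i) ⊆ cube x R ∩ Ω := by
    intro i hi
    refine subset_inter ?_ (closedBall_subset_of_lt_bdist hΩ (hzΩ i) ?_)
    · refine Metric.closedBall_subset_closedBall' ?_
      have h1 : ∑ j ∈ Finset.range (i+1), r j ≤ ∑ j ∈ Finset.range m, r j :=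
        Finset.sum_le_sum_of_subset_of_nonneg
          (Finset.range_mono (Nat.succ_le_of_lt hi)) fun j _ _ => hr0' j
      rw [Finset.sum_range_succ] at h1
      linarith [hdist i]
    · have := hb i; simp only [hr]; linarith
  set G : ℕ → ℝ := fun i => ∫ w in Metric.closedBall (z i) (r i), ‖g w‖^q with hG
  have hG0 : ∀ i, 0 ≤ G i := fun i => integral_nonneg fun w => Real.rpow_nonneg (norm_nonneg _) q
  set I := ∫ w in cube x R ∩ Ω, ‖g w‖^q with hI
  have hI0 : 0 ≤ I := integral_nonneg fun w => Real.rpow_nonneg (norm_nonneg _) q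
  have hGsum : ∑ i ∈ Finset.range m, G i ≤ (5:ℝ)^n * I := by
    have := sum_setIntegral_le (fun w => Real.rpow_nonneg (norm_nonneg (g w)) q) hint
      (fun i => Metric.isClosed_closedBall.measurableSet) hQ
      (fun w J hJ => overlap hb hsep w J hJ)
    exact_mod_cast this
  have hFstep : ∀ i < m, dist (F (z i)) (F (z (i+1))) ≤
      C₁ * (r i ^ (1 - n/q : ℝ) * G i ^ (1/q)) := by
    intro i hi
    rw [Real.dist_eq]
    refine hmor Ω hΩ F g hF hg (z i) (z (i+1)) (r i) (hr0 i) (hstep i) ?_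
      (hint.mono_set (hQ i hi))
    refine closedBall_subset_of_lt_bdist hΩ (hzΩ i) ?_
    have := hb i; simp only [hr]; linarith
  -- The exponents match since `(1 - n/q) * (q / (q-1)) = β`.
  have hconj : (q/(q-1)).HolderConjugate q := by
    rw [Real.holderConjugate_iff]
    refine ⟨by rw [lt_div_iff₀ hq1]; linarith, by field_simp; ring⟩
  have hhol := Real.inner_le_Lp_mul_Lq_of_nonneg (Finset.range m) hconj
    (f := fun i => r i ^ (1 - n/q : ℝ)) (g := fun i => G i ^ (1/q))
    (fun i _ => Real.rpow_nonneg (hr0' i) _) (fun i _ => Real.rpow_nonneg (hG0 i) _)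
  have e1 : ∀ i, (r i ^ (1 - n/q : ℝ)) ^ (q/(q-1)) = r i ^ β := by
    intro i
    rw [← Real.rpow_mul (hr0' i)]; congr 1; rw [hβ]; field_simp
  have e2 : ∀ i, (G i ^ (1/q)) ^ q = G i := by
    intro i
    rw [← Real.rpow_mul (hG0 i), one_div_mul_cancel hq0.ne', Real.rpow_one]
  simp only [e1, e2] at hhol
  have h3 : (∑ i ∈ Finset.range m, r i ^ β) ^ (1/(q/(q-1))) ≤ R ^ (1 - n/q : ℝ) := by
    have : R ^ (1 - n/q : ℝ) = (R ^ β) ^ (1/(q/(q-1))) := by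
      rw [← Real.rpow_mul hR.le]; congr 1; rw [hβ]; field_simp
    rw [this]
    exact Real.rpow_le_rpow (Finset.sum_nonneg fun i _ => Real.rpow_nonneg (hr0' i) _) hsum
      (by positivity)
  have h4 : (∑ i ∈ Finset.range m, G i) ^ (1/q) ≤ ((5:ℝ)^n) ^ (1/q) * I ^ (1/q) := by
    rw [← Real.mul_rpow (by positivity) hI0]
    exact Real.rpow_le_rpow (Finset.sum_nonneg fun i _ => hG0 i) hGsum (by positivity)
  calc |F x - F y| = dist (F (z 0)) (F (z m)) := by rw [hz0, hzm, Real.dist_eq]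
    _ ≤ ∑ i ∈ Finset.range m, dist (F (z i)) (F (z (i+1))) :=
        dist_le_range_sum_dist (fun i => F (z i)) m
    _ ≤ ∑ i ∈ Finset.range m, C₁ * (r i ^ (1 - n/q : ℝ) * G i ^ (1/q)) :=
        Finset.sum_le_sum fun i hi => hFstep i (Finset.mem_range.1 hi)
    _ = C₁ * ∑ i ∈ Finset.range m, r i ^ (1 - n/q : ℝ) * G i ^ (1/q) :=
        (Finset.mul_sum _ _ _).symm
    _ ≤ C₁ * (R ^ (1 - n/q : ℝ) * (((5:ℝ)^n) ^ (1/q) * I ^ (1/q))) := by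
        refine mul_le_mul_of_nonneg_left (hhol.trans ?_) hC₁
        exact mul_le_mul h3 h4 (Real.rpow_nonneg (Finset.sum_nonneg fun i _ => hG0 i) _)
          (Real.rpow_nonneg hR.le _)
    _ = _ := by ring

/-- On a set of finite measure, `L_p` integrability gives `L_q` integrability for `q ≤ p`. -/
lemma integrableOn_rpow_of_le {S : Set (Eu n)} {g : Eu n → Eu n} {p q : ℝ} (hq : 0 ≤ q)
    (hqp : q ≤ p) (hS : volume S ≠ ⊤) (hgm : AEStronglyMeasurable g (volume.restrict S))
    (hgp : IntegrableOn (fun z => ‖g z‖ ^ p) S) : IntegrableOn (fun z => ‖g z‖ ^ q) S := by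
  refine Integrable.mono' ((integrableOn_const (C := (1:ℝ)) hS).add hgp)
    (hgm.norm.aemeasurable.pow_const q).aestronglyMeasurable (Eventually.of_forall fun z => ?_)
  have h0 := norm_nonneg (g z)
  rw [Real.norm_of_nonneg (Real.rpow_nonneg h0 q)]
  simp only [Pi.add_apply]
  rcases le_total ‖g z‖ 1 with h | h
  · linarith [Real.rpow_le_one h0 h hq, Real.rpow_nonneg h0 p]
  · linarith [Real.rpow_le_rpow_of_exponent_le h hqp]

/-- Proposition 3.4.  Let `Ω ⊆ ℝⁿ` be a domain, `n < q ≤ p < ∞`,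
`β = (q−n)/(q−1)`, and let `F ∈ L¹_p(Ω)` be continuous.  There exist constants
`λ₁ = λ₁(n,q) ≥ 1` and `C = C(n,q) > 0` such that for every `x, y ∈ Ω` and every
`R ≥ λ₁·d̃_{β,Ω}(x,y)^{1/β}`,
`|F(x) − F(y)| ≤ C·R·(|Q(x,R)|⁻¹ ∫_{Q(x,R)∩Ω} ‖∇F‖^q)^{1/q}`. -/
theorem statement13 (n : ℕ) (hn : 0 < n) (q : ℝ) (hq : (n:ℝ) < q) :
    ∃ lam₁ C : ℝ, 1 ≤ lam₁ ∧ 0 < C ∧ ∀ p : ℝ, q ≤ p →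
      ∀ (Ω : Set (Eu n)), IsOpen Ω → IsConnected Ω →
        ∀ F g, ContL1pRep Ω p F g →
          ∀ x ∈ Ω, ∀ y ∈ Ω, ∀ R : ℝ,
            lam₁ * dTil Ω ((q - n)/(q - 1)) x y ^ (((q - n)/(q - 1))⁻¹) ≤ R →
            |F x - F y| ≤ C * R *
              ((∫ z in cube x R ∩ Ω, ‖g z‖ ^ q) / (volume (cube x R)).toReal) ^ (1/q) := by
  have hn1 : (1:ℝ) ≤ n := by exact_mod_cast hn
  have hq1 : 1 < q := by linarith
  have hq0 : 0 < q := by linarith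
  have hβ0 : 0 < (q - n)/(q - 1) := div_pos (by linarith) (by linarith)
  have hβ1 : (q - n)/(q - 1) ≤ 1 := by rw [div_le_one (by linarith)]; linarith
  obtain ⟨C₁, hC₁, hmor⟩ := morrey n hq1 hq
  set β : ℝ := (q - n)/(q - 1) with hβ
  set K : ℝ := C₁ * ((5:ℝ)^n) ^ (1/q) with hK
  have h5 : 1 ≤ ((5:ℝ)^n) ^ (1/q) := Real.one_le_rpow (one_le_pow₀ (by norm_num)) (by positivity)
  have hK0 : 0 ≤ K := by positivity
  have hKC : C₁ ≤ K := le_mul_of_one_le_right hC₁ h5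
  have hlam : (1:ℝ) ≤ 33 ^ β⁻¹ := Real.one_le_rpow (by norm_num) (by positivity)
  refine ⟨33 ^ β⁻¹, K * 2 ^ ((n:ℝ)/q) + 1, hlam, by positivity, ?_⟩
  intro p hqp Ω hΩ hc F g hFg x hx y hy R hRle
  obtain ⟨hF, hg, hgp⟩ := hFg
  have hd0 : 0 ≤ dTil Ω β x y :=
    add_nonneg (dSub_nonneg Ω β x y) (Real.rpow_nonneg (norm_nonneg _) β)
  have hdR : dTil Ω β x y ^ β⁻¹ ≤ R :=
    (le_mul_of_one_le_left (Real.rpow_nonneg hd0 _) hlam).trans hRle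
  have hR0 : 0 ≤ R := (Real.rpow_nonneg hd0 _).trans hdR
  have hI0 : 0 ≤ ∫ z in cube x R ∩ Ω, ‖g z‖ ^ q :=
    integral_nonneg fun w => Real.rpow_nonneg (norm_nonneg _) q
  by_cases hxy : x = y
  · subst hxy
    rw [sub_self, abs_zero]
    positivity
  have hnorm : 0 < ‖x - y‖ := norm_pos_iff.2 (sub_ne_zero.2 hxy)
  have hrd : ‖x - y‖ ^ β ≤ dTil Ω β x y := le_add_of_nonneg_left (dSub_nonneg Ω β x y)
  have hrR : ‖x - y‖ ≤ R := by
    refine le_trans ?_ hdR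
    calc ‖x - y‖ = (‖x - y‖ ^ β) ^ β⁻¹ := by
          rw [← Real.rpow_mul hnorm.le, mul_inv_cancel₀ hβ0.ne', Real.rpow_one]
      _ ≤ _ := Real.rpow_le_rpow (Real.rpow_nonneg hnorm.le _) hrd (by positivity)
  have hR : 0 < R := hnorm.trans_le hrR
  have hcube : volume (cube x R ∩ Ω) ≠ ⊤ :=
    ((measure_mono inter_subset_left).trans_lt measure_closedBall_lt_top).ne
  have hint : IntegrableOn (fun z => ‖g z‖ ^ q) (cube x R ∩ Ω) :=
    integrableOn_rpow_of_le hq0.le hqp hcube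
      (hg.2.1.aestronglyMeasurable.mono_measure (Measure.restrict_mono inter_subset_right le_rfl))
      (hgp.mono_set inter_subset_right)
  suffices hmain : |F x - F y| ≤
      K * (R ^ (1 - n/q : ℝ) * (∫ z in cube x R ∩ Ω, ‖g z‖ ^ q) ^ (1/q)) by
    rw [scale_mean hR hI0 x] at hmain
    refine hmain.trans ?_
    rw [← mul_assoc, mul_assoc (K * 2 ^ ((n:ℝ)/q) + 1)]
    refine mul_le_mul_of_nonneg_right (by linarith) (by positivity)
  -- A single cube suffices as soon as five times the cube of radius `‖x - y‖` lies in `Ω`.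
  have hsingle : Metric.closedBall x (5 * ‖x - y‖) ⊆ Ω → |F x - F y| ≤
      K * (R ^ (1 - n/q : ℝ) * (∫ z in cube x R ∩ Ω, ‖g z‖ ^ q) ^ (1/q)) := by
    intro hball
    have hsub : Metric.closedBall x ‖x - y‖ ⊆ cube x R ∩ Ω :=
      subset_inter (Metric.closedBall_subset_closedBall hrR)
        ((Metric.closedBall_subset_closedBall (by linarith)).trans hball)
    refine (hmor Ω hΩ F g hF hg x y ‖x - y‖ hnorm (by rw [dist_comm, dist_eq_norm]) hball
      (hint.mono_set hsub)).trans ?_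
    have hnq : 0 ≤ 1 - (n:ℝ)/q := by
      rw [sub_nonneg, div_le_one hq0]; exact hq.le
    have hle : ∫ z in Metric.closedBall x ‖x - y‖, ‖g z‖ ^ q ≤
        ∫ z in cube x R ∩ Ω, ‖g z‖ ^ q :=
      setIntegral_mono_set hint
        (Eventually.of_forall fun w => Real.rpow_nonneg (norm_nonneg _) q) hsub.eventuallyLE
    have h0 : 0 ≤ ∫ z in Metric.closedBall x ‖x - y‖, ‖g z‖ ^ q :=
      integral_nonneg fun w => Real.rpow_nonneg (norm_nonneg _) q
    gcongr
  rcases (frontier Ω).eq_empty_or_nonempty with hfr | hfr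
  · refine hsingle ?_
    rcases frontier_eq_empty_iff.1 hfr with h | h
    · exact absurd hx (by simp [h])
    · simp [h]
  rcases le_or_gt (dist y x) (bdist Ω x / 10) with hfar | hfar
  · refine hsingle (closedBall_subset_of_lt_bdist hΩ hx ?_)
    rw [dist_comm, dist_eq_norm] at hfar
    have := bdist_pos hΩ hfr hx
    linarith
  · -- The term `‖x - y‖ ^ β > 0` leaves room for a curve that nearly realizes `d_β`.
    obtain ⟨D, hD, hDlt⟩ : ∃ D ∈ subLenSet Ω β x y, D < dTil Ω β x y :=
      exists_lt_of_csInf_lt (subLenSet_nonempty hΩ hc hfr β hx hy)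
        (lt_add_of_pos_right _ (Real.rpow_pos_of_pos hnorm β))
    obtain ⟨m, z, hz0, hzm, hzΩ, hstep, hsep, hsum⟩ := exists_chain hΩ hfr hβ0 hβ1 hD hfar
    refine chain_estimate hq1 hq hC₁ hmor hΩ hfr hF hg hR hint hz0 hzm hzΩ hstep hsep ?_
    calc _ ≤ 33 * D := hsum
      _ ≤ 33 * dTil Ω β x y := by linarith
      _ = (33 ^ β⁻¹ * dTil Ω β x y ^ β⁻¹) ^ β := by
          rw [← Real.mul_rpow (by norm_num) hd0, ← Real.rpow_mul (by positivity),
            inv_mul_cancel₀ hβ0.ne', Real.rpow_one]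
      _ ≤ R ^ β := Real.rpow_le_rpow (by positivity) hRle hβ0.le
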